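/- There exist m₀, C ∈ ℕ such that for every m ≥ m₀ there exists a bipartite graph B on vertex classes Z and X ∪ Y with the following properties: (i) B has maximum degree at most 40 and every vertex in Z has degree at most 3; (ii) |Z| = Cm, |X| = (C−1)m and |Y| = 2m; (iii) B is Y-robust. -/

import Mathlib

/-!
Start from a random multigraph with linearly many edges in which all small vertex sets expand;
applying Hall's condition to small sets on one side and to complements of large sets on the other
side shows that it is robust. Then bound the degrees without losing robustness: a vertex of
degree `d` is replaced by a path `v₀ - l₁ - v₁ - ⋯ - l_d - v_d` through `d` new vertices `lᵢ`
belonging to the other class, and its `i`-th edge is moved to `vᵢ`. If `vᵢ` is matched by that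
edge (or `v₀` is left out, when `v` was), the path minus this vertex splits into two pieces, each
with a unique perfect matching. Splitting both classes makes all degrees at most `3`.
-/

open Finset Function

section Counting

variable {ι α β : Type*}

theorem dens_biUnion_le_sum_dens [Fintype α] [DecidableEq α] (s : Finset ι) (t : ι → Finset α) :
    (s.biUnion t).dens ≤ ∑ i ∈ s, (t i).dens := by
  simp only [dens_eq_card_div_card, ← sum_div]
  gcongr
  exact_mod_cast card_biUnion_le

theorem dens_filter_forall_mem [Fintype ι] [DecidableEq ι] [Fintype β] [DecidableEq β] [Nonempty β]
    (U : Finset ι) (T : Finset β) :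
    ({f | ∀ i ∈ U, f i ∈ T} : Finset (ι → β)).dens = T.dens ^ #U := by
  have hpi : ({f | ∀ i ∈ U, f i ∈ T} : Finset (ι → β)) =
      Fintype.piFinset fun i => if i ∈ U then T else univ := by
    ext f
    simp only [mem_filter_univ, Fintype.mem_piFinset]
    exact forall_congr' fun i => by by_cases hi : i ∈ U <;> simp [hi]
  calc ({f | ∀ i ∈ U, f i ∈ T} : Finset (ι → β)).dens
      = ∏ i, (if i ∈ U then T else univ).dens := by
        simp [hpi, dens_eq_card_div_card, prod_div_distrib]
    _ = ∏ i, if i ∈ U then T.dens else 1 := by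
        refine prod_congr rfl fun i _ => ?_
        split_ifs <;> simp
    _ = T.dens ^ #U := by simp

theorem pow_self_le_three_pow_mul_factorial (s : ℕ) : s ^ s ≤ 3 ^ s * s.factorial := by
  have hexp : (s : ℝ) ^ s ≤ Real.exp s * s.factorial :=
    (div_le_iff₀ (by positivity)).1 (Real.pow_div_factorial_le_exp s (by positivity) s)
  have hthree : Real.exp s ≤ 3 ^ s := by
    rw [← Real.exp_one_pow]
    gcongr
    exact Real.exp_one_lt_three.le
  exact_mod_cast hexp.trans (mul_le_mul_of_nonneg_right hthree (by positivity))

theorem choose_mul_pow_self_le (n s : ℕ) : n.choose s * s ^ s ≤ (3 * n) ^ s :=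
  calc n.choose s * s ^ s ≤ n.choose s * (3 ^ s * s.factorial) := by
        gcongr
        exact pow_self_le_three_pow_mul_factorial s
    _ = 3 ^ s * n.descFactorial s := by rw [n.descFactorial_eq_factorial_mul_choose]; ring
    _ ≤ 3 ^ s * n ^ s := by gcongr; exact n.descFactorial_le_pow s
    _ = (3 * n) ^ s := (mul_pow ..).symm

theorem choose_mul_div_pow_le {a n c : ℕ} (h : a ≤ c * n) (s : ℕ) :
    (a.choose s * (s / n) ^ s : ℚ≥0) ≤ (3 * c) ^ s :=
  calc (a.choose s * (s / n) ^ s : ℚ≥0) = (a.choose s * s ^ s : ℕ) / (n : ℚ≥0) ^ s := by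
        push_cast; ring
    _ ≤ ((3 * a) ^ s : ℕ) / (n : ℚ≥0) ^ s := by gcongr; exact choose_mul_pow_self_le a s
    _ = (3 * a / n) ^ s := by push_cast; rw [div_pow]
    _ ≤ (3 * c) ^ s := by
        gcongr
        refine div_le_of_le_mul₀ (by positivity) (by positivity) ?_
        rw [mul_assoc]
        gcongr
        exact_mod_cast h

theorem choose_mul_choose_mul_div_pow_le {a n s : ℕ} (h : a ≤ 2 * n) (hs : 3 * s ≤ 2 * n) :
    (a.choose s * n.choose s * (s / n) ^ (11 * s) : ℚ≥0) ≤ (1 / 2) ^ s := by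
  have hratio : (s / n : ℚ≥0) ≤ 2 / 3 := by
    refine div_le_of_le_mul₀ (by positivity) (by positivity) ?_
    rw [div_mul_eq_mul_div, le_div_iff₀ (by positivity), mul_comm]
    exact_mod_cast hs
  calc (a.choose s * n.choose s * (s / n) ^ (11 * s) : ℚ≥0)
      = (a.choose s * (s / n) ^ s) * (n.choose s * (s / n) ^ s) * ((s / n) ^ 9) ^ s := by ring
    _ ≤ (3 * (2 : ℕ)) ^ s * (3 * (1 : ℕ)) ^ s * ((2 / 3) ^ 9) ^ s := by
        gcongr
        · exact choose_mul_div_pow_le h s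
        · exact choose_mul_div_pow_le (one_mul n).ge s
    _ = (3 * (2 : ℕ) * (3 * (1 : ℕ)) * (2 / 3) ^ 9) ^ s := by simp only [mul_pow]
    -- `9 = 11 - 2` is the least exponent for which this base is at most `1 / 2`.
    _ ≤ (1 / 2) ^ s := by
        gcongr
        exact_mod_cast (by norm_num : (3 * (2 : ℕ) * (3 * (1 : ℕ)) * (2 / 3) ^ 9 : ℚ) ≤ 1 / 2)

theorem sum_Icc_one_half_pow_lt_one (n : ℕ) : ∑ s ∈ Icc 1 n, (1 / 2 : ℚ≥0) ^ s < 1 := by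
  have hsum : ∑ s ∈ Icc 1 n, (1 / 2 : ℚ≥0) ^ s + (1 / 2) ^ n = 1 := by
    induction n with
    | zero => simp
    | succ n ih =>
      rw [sum_Icc_succ_top (by lia), add_assoc, pow_succ, ← mul_add, add_halves, mul_one, ih]
  calc ∑ s ∈ Icc 1 n, (1 / 2 : ℚ≥0) ^ s < ∑ s ∈ Icc 1 n, (1 / 2 : ℚ≥0) ^ s + (1 / 2) ^ n :=
        lt_add_of_pos_right _ (by positivity)
    _ = 1 := hsum

theorem dens_biUnion_powersetCard_le [Fintype α] [DecidableEq α] [Fintype β] [DecidableEq β]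
    [Nonempty β] (h : Fintype.card α ≤ 2 * Fintype.card β) {s : ℕ}
    (hs : 3 * s ≤ 2 * Fintype.card β) :
    ((powersetCard s univ ×ˢ powersetCard s univ).biUnion fun ST : Finset α × Finset β =>
      ({f | ∀ i ∈ ST.1 ×ˢ univ, f i ∈ ST.2} : Finset (α × Fin 11 → β))).dens ≤ (1 / 2) ^ s :=
  calc _ ≤ ∑ ST ∈ powersetCard s (univ : Finset α) ×ˢ powersetCard s (univ : Finset β),
          ({f | ∀ i ∈ ST.1 ×ˢ univ, f i ∈ ST.2} : Finset (α × Fin 11 → β)).dens :=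
        dens_biUnion_le_sum_dens ..
    _ = ∑ _ST ∈ powersetCard s (univ : Finset α) ×ˢ powersetCard s (univ : Finset β),
          (s / Fintype.card β : ℚ≥0) ^ (11 * s) := by
        refine sum_congr rfl fun _ hST => ?_
        obtain ⟨hS, hT⟩ := mem_product.1 hST
        rw [mem_powersetCard_univ] at hS hT
        rw [dens_filter_forall_mem, card_product, card_univ, Fintype.card_fin, hS, mul_comm,
          dens_eq_card_div_card, hT]
    _ = (Fintype.card α).choose s * (Fintype.card β).choose s *
          (s / Fintype.card β : ℚ≥0) ^ (11 * s) := by simp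
    _ ≤ (1 / 2) ^ s := choose_mul_choose_mul_div_pow_le h hs

theorem exists_expander [Fintype α] [Fintype β] [DecidableEq β]
    (h : Fintype.card α ≤ 2 * Fintype.card β) :
    ∃ f : α × Fin 11 → β, ∀ S : Finset α, 3 * #S ≤ 2 * Fintype.card β →
      #S ≤ #((S ×ˢ univ).image f) := by
  classical
  cases isEmpty_or_nonempty β with
  | inl hβ =>
    have : IsEmpty α := Fintype.card_eq_zero_iff.1 (by simpa using h)
    exact ⟨isEmptyElim, fun S _ => by simp [S.eq_empty_of_isEmpty]⟩
  | inr hβ =>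
    let bad (s : ℕ) : Finset (α × Fin 11 → β) :=
      (powersetCard s univ ×ˢ powersetCard s univ).biUnion fun ST : Finset α × Finset β =>
        {f | ∀ i ∈ ST.1 ×ˢ univ, f i ∈ ST.2}
    let sizes := Icc 1 (2 * Fintype.card β / 3)
    have hbad : (sizes.biUnion bad).dens < 1 :=
      calc (sizes.biUnion bad).dens ≤ ∑ s ∈ sizes, (bad s).dens := dens_biUnion_le_sum_dens ..
        _ ≤ ∑ s ∈ sizes, (1 / 2) ^ s := sum_le_sum fun s hs =>
            dens_biUnion_powersetCard_le h (by have := (mem_Icc.1 hs).2; lia)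
        _ < 1 := sum_Icc_one_half_pow_lt_one _
    obtain ⟨f, hf⟩ : ∃ f, f ∉ sizes.biUnion bad := by
      by_contra! hall
      exact hbad.ne (dens_eq_one.2 (eq_univ_of_forall hall))
    refine ⟨f, fun S hS => ?_⟩
    by_contra! hlt
    obtain ⟨T, hT, hcard⟩ := exists_superset_card_eq hlt.le (by lia)
    refine hf (mem_biUnion.2 ⟨#S, mem_Icc.2 (by lia), mem_biUnion.2 ⟨(S, T), by simp [hcard], ?_⟩⟩)
    exact mem_filter_univ _ |>.2 fun i hi => hT (mem_image_of_mem f hi)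

theorem card_le_card_biUnion_of_hall [Fintype α] [DecidableEq β] {r : α → β → Prop}
    [∀ a, DecidablePred (r a)] {P : Finset β} (hP : Fintype.card α ≤ #P) (k : ℕ)
    (hleft : ∀ A : Finset α, #A ≤ k → ∃ N ⊆ P, #A ≤ #N ∧ ∀ b ∈ N, ∃ a ∈ A, r a b)
    (hright : ∀ B ⊆ P, #B + k ≤ #P → ∃ N : Finset α, #B ≤ #N ∧ ∀ a ∈ N, ∃ b ∈ B, r a b)
    (A : Finset α) : #A ≤ #(A.biUnion fun a => {b ∈ P | r a b}) := by
  classical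
  by_contra! hlt
  set N := A.biUnion fun a => {b ∈ P | r a b}
  have hA : k < #A := by
    by_contra! hA
    obtain ⟨N', hN'P, hcard, hadj⟩ := hleft A hA
    refine (hcard.trans (card_le_card fun b hb => ?_)).not_gt hlt
    obtain ⟨a, ha, hab⟩ := hadj b hb
    exact mem_biUnion.2 ⟨a, ha, mem_filter.2 ⟨hN'P hb, hab⟩⟩
  have hAP : #A ≤ #P := A.card_le_univ.trans hP
  obtain ⟨B, hBP, hB⟩ : ∃ B ⊆ P \ N, #B = #P - #A + 1 :=
    exists_subset_card_eq (by have := le_card_sdiff N P; lia)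
  obtain ⟨N', hcard, hadj⟩ := hright B (hBP.trans sdiff_subset) (by lia)
  have hdisj : N' ⊆ Aᶜ := fun a ha => mem_compl.2 fun haA => by
    obtain ⟨b, hb, hab⟩ := hadj a ha
    obtain ⟨hbP, hbN⟩ := mem_sdiff.1 (hBP hb)
    exact hbN (mem_biUnion.2 ⟨a, haA, mem_filter.2 ⟨hbP, hab⟩⟩)
  have hN' : #N' ≤ Fintype.card α - #A := card_compl A ▸ card_le_card hdisj
  lia

end Counting

section Preimage

variable {α β γ : Type*}

theorem ncard_preimage_sumElim_le (f : α → γ) (g : β → γ) (s : Set γ) :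
    (Sum.elim f g ⁻¹' s).ncard ≤ (f ⁻¹' s).ncard + (g ⁻¹' s).ncard := by
  have hunion : Sum.elim f g ⁻¹' s = Sum.inl '' (f ⁻¹' s) ∪ Sum.inr '' (g ⁻¹' s) := by
    ext (a | b) <;> simp
  rw [hunion, ← Set.ncard_image_of_injective (f ⁻¹' s) (Sum.inl_injective (β := β)),
    ← Set.ncard_image_of_injective (g ⁻¹' s) (Sum.inr_injective (α := α))]
  exact Set.ncard_union_le ..

theorem ncard_preimage_singleton_le_one {f : α → β} (hf : Injective f) (b : β) :
    (f ⁻¹' {b}).ncard ≤ 1 := by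
  have hsub := Set.subsingleton_singleton.preimage hf (s := {b})
  exact (Set.ncard_le_one hsub.finite).2 fun _ hx _ hy => hsub hx hy

theorem image_compl_union_compl_range {f : α → β} (hf : Injective f) (s : Set α) :
    f '' sᶜ ∪ (Set.range f)ᶜ = (f '' s)ᶜ := by
  rw [Set.image_compl_eq_range_sdiff_image hf]
  grind

theorem bijOn_range_of_injective_comp {f : β → γ} {g : α → β} {t : Set γ} (hinj : Injective (f ∘ g))
    (hrange : Set.range (f ∘ g) = t) : Set.BijOn f (Set.range g) t := by
  subst hrange
  refine ⟨fun _ ⟨a, ha⟩ => ⟨a, congrArg f ha⟩, ?_, fun _ ⟨a, ha⟩ => ⟨g a, ⟨a, rfl⟩, ha⟩⟩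
  rintro _ ⟨a, rfl⟩ _ ⟨b, rfl⟩ hab
  exact congrArg g (hinj hab)

theorem exists_equiv_sum_inr_eq [Finite α] [Finite γ] {f : β → γ} (hf : Injective f)
    (hcard : Nat.card γ = Nat.card α + Nat.card β) :
    ∃ φ : γ ≃ α ⊕ β, ∀ b, φ (f b) = Sum.inr b := by
  classical
  have hsum := Set.ncard_add_ncard_compl (Set.range f)
  have hrange : (Set.range f).ncard = Nat.card β := by
    rw [← Set.image_univ, Set.ncard_image_of_injective _ hf, Set.ncard_univ]
  have ψ : ↥(Set.range f)ᶜ ≃ α := (Finite.card_eq.1 (by rw [Nat.card_coe_set_eq]; lia)).some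
  refine ⟨(Equiv.Set.sumCompl (Set.range f)).symm.trans
    ((Equiv.sumComm _ _).trans (ψ.sumCongr (Equiv.ofInjective f hf).symm)), fun b => ?_⟩
  simp [Equiv.Set.sumCompl_symm_apply_of_mem (Set.mem_range_self b)]

end Preimage

/-- A bipartite multigraph with vertex classes `Z` and `W` and edge set `E`. Parallel edges are
allowed, so that a family of edges can be described by its two endpoint maps. -/
structure BipartiteMultigraph (Z W E : Type*) where
  fst : E → Z
  snd : E → W

namespace BipartiteMultigraph

variable {Z W Y E : Type*}

/-- Adjacency between the two vertex classes. -/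
def Adj (G : BipartiteMultigraph Z W E) (z : Z) (w : W) : Prop :=
  ∃ e, G.fst e = z ∧ G.snd e = w

/-- The same multigraph with the two vertex classes exchanged. -/
def swap (G : BipartiteMultigraph Z W E) : BipartiteMultigraph W Z E where
  fst := G.snd
  snd := G.fst

/-- The degree, with multiplicity, of a vertex of the first class; degrees in the second class are
those of `G.swap`. A vertex of infinite degree gets the value `0`. -/
noncomputable def degree (G : BipartiteMultigraph Z W E) (z : Z) : ℕ :=
  (G.fst ⁻¹' {z}).ncard

/-- There is a perfect matching, given by its set of edges, between the vertex sets `A` and `B`. -/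
def HasPerfectMatching (G : BipartiteMultigraph Z W E) (A : Set Z) (B : Set W) : Prop :=
  ∃ M : Set E, Set.BijOn G.fst M A ∧ Set.BijOn G.snd M B

/-- The vertices of the paths replacing the vertices of the first class in `split`: a vertex `z` of
degree `d` is replaced by a path through `⟨z, 0⟩, …, ⟨z, d⟩`. -/
abbrev PathVertex (G : BipartiteMultigraph Z W E) : Type _ :=
  Σ z, Fin (G.degree z + 1)

section Basic

variable {G : BipartiteMultigraph Z W E} {A : Set Z} {B : Set W}

theorem HasPerfectMatching.swap (h : G.HasPerfectMatching A B) : G.swap.HasPerfectMatching B A :=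
  h.imp fun _ hM => hM.symm

theorem HasPerfectMatching.exists_injective (h : G.HasPerfectMatching Set.univ B) :
    ∃ ξ : Z → W, Injective ξ ∧ (∀ z, G.Adj z (ξ z)) ∧ Set.range ξ = B := by
  obtain ⟨M, hfst, hsnd⟩ := h
  choose e heM hefst using fun z => hfst.surjOn (Set.mem_univ z)
  have he (e' : E) (he' : e' ∈ M) : e (G.fst e') = e' := hfst.injOn (heM _) he' (hefst _)
  refine ⟨G.snd ∘ e, fun z z' hz => ?_, fun z => ⟨e z, hefst z, rfl⟩, ?_⟩
  · rw [← hefst z, ← hefst z', hsnd.injOn (heM z) (heM z') hz]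
  · refine (Set.range_subset_iff.2 fun z => hsnd.mapsTo (heM z)).antisymm fun w hw => ?_
    obtain ⟨e', he', rfl⟩ := hsnd.surjOn hw
    exact ⟨G.fst e', congrArg G.snd (he e' he')⟩

theorem swap_adj {z : Z} {w : W} : G.swap.Adj w z ↔ G.Adj z w :=
  exists_congr fun _ => and_comm

theorem ncard_setOf_adj_le_degree [Finite E] (G : BipartiteMultigraph Z W E) {f : Y → W}
    (hf : Injective f) (z : Z) : {y | G.Adj z (f y)}.ncard ≤ G.degree z :=
  calc {y | G.Adj z (f y)}.ncard = (f '' {y | G.Adj z (f y)}).ncard :=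
        (Set.ncard_image_of_injective _ hf).symm
    _ ≤ (G.snd '' (G.fst ⁻¹' {z})).ncard :=
        Set.ncard_le_ncard (Set.image_subset_iff.2 fun _ hy => hy)
    _ ≤ G.degree z := Set.ncard_image_le

theorem hasPerfectMatching_of_hall [Fintype Z] (G : BipartiteMultigraph Z W E) {P : Finset W}
    (hP : #P = Fintype.card Z) (k : ℕ)
    (hfst : ∀ A : Finset Z, #A ≤ k → ∃ N ⊆ P, #A ≤ #N ∧ ∀ w ∈ N, ∃ z ∈ A, G.Adj z w)
    (hsnd : ∀ B ⊆ P, #B + k ≤ #P → ∃ N : Finset Z, #B ≤ #N ∧ ∀ z ∈ N, ∃ w ∈ B, G.Adj z w) :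
    G.HasPerfectMatching Set.univ P := by
  classical
  have hall := card_le_card_biUnion_of_hall hP.ge k hfst hsnd
  obtain ⟨g, hg, hgP⟩ := (all_card_le_biUnion_card_iff_exists_injective _).1 hall
  choose hmem e hefst hesnd using fun z => mem_filter.1 (hgP z)
  obtain rfl : G.snd ∘ e = g := funext hesnd
  have himage : univ.image (G.snd ∘ e) = P :=
    eq_of_subset_of_card_le (image_subset_iff.2 fun z _ => hmem z)
      (by rw [card_image_of_injective _ hg, card_univ, hP])
  have hid : G.fst ∘ e = id := funext hefst
  exact ⟨Set.range e, bijOn_range_of_injective_comp (hid ▸ injective_id) (by simp [hid]),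
    bijOn_range_of_injective_comp hg (by rw [← himage, coe_image, coe_univ, Set.image_univ])⟩

end Basic

section Split

variable [Finite E] (G : BipartiteMultigraph Z W E)

/-- A numbering, for every vertex `z` of the first class, of the edges at `z`. -/
noncomputable def slots : E ≃ Σ z, Fin (G.degree z) :=
  (Equiv.sigmaFiberEquiv G.fst).symm.trans
    (Equiv.sigmaCongrRight fun z => Finite.equivFin {e // G.fst e = z})

theorem fst_slots (e : E) : (G.slots e).1 = G.fst e := rfl

theorem fst_slots_symm (x : Σ z, Fin (G.degree z)) : G.fst (G.slots.symm x) = x.1 := by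
  rw [← fst_slots, Equiv.apply_symm_apply]

/-- The vertex following the slot of an edge on the path replacing its first endpoint. -/
noncomputable def after (e : E) : G.PathVertex :=
  Sigma.map id (fun _ => Fin.succ) (G.slots e)

/-- The vertex preceding the slot of an edge on the path replacing its first endpoint. -/
noncomputable def before (e : E) : G.PathVertex :=
  Sigma.map id (fun _ => Fin.castSucc) (G.slots e)

/-- Replaces every vertex `z` of the first class by the path on its `PathVertex`s, consecutive ones
being joined through a new vertex of the second class. These new vertices correspond to the edges at
`z`, and the edge giving the `i`-th of them becomes an edge at `⟨z, i⟩`. -/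
noncomputable def split : BipartiteMultigraph G.PathVertex (W ⊕ E) (E ⊕ E ⊕ E) where
  fst := Sum.elim G.after (Sum.elim G.before G.after)
  snd := Sum.elim (Sum.inl ∘ G.snd) (Sum.elim Sum.inr Sum.inr)

theorem after_injective : Injective G.after :=
  (injective_id.sigma_map fun z => Fin.succ_injective (G.degree z)).comp G.slots.injective

theorem before_injective : Injective G.before :=
  (injective_id.sigma_map fun z => Fin.castSucc_injective (G.degree z)).comp G.slots.injective

theorem split_degree_le (x : G.PathVertex) : G.split.degree x ≤ 3 :=
  calc G.split.degree x
      ≤ (G.after ⁻¹' {x}).ncard + (Sum.elim G.before G.after ⁻¹' {x}).ncard :=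
        ncard_preimage_sumElim_le ..
    _ ≤ (G.after ⁻¹' {x}).ncard + ((G.before ⁻¹' {x}).ncard + (G.after ⁻¹' {x}).ncard) := by
        gcongr
        exact ncard_preimage_sumElim_le ..
    _ ≤ 1 + (1 + 1) := by
        gcongr <;> apply ncard_preimage_singleton_le_one
        exacts [G.after_injective, G.before_injective, G.after_injective]

theorem split_swap_degree_inl (w : W) : G.split.swap.degree (Sum.inl w) = G.swap.degree w := by
  have hpreimage : G.split.snd ⁻¹' {Sum.inl w} = Sum.inl '' (G.snd ⁻¹' {w}) := by
    ext (e | e | e) <;> simp [split]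
  simp only [degree, swap, hpreimage, Set.ncard_image_of_injective _ Sum.inl_injective]

theorem split_swap_degree_inr (e : E) : G.split.swap.degree (Sum.inr e) = 2 := by
  have hpreimage : G.split.snd ⁻¹' {Sum.inr e} = {Sum.inr (Sum.inl e), Sum.inr (Sum.inr e)} := by
    ext (e | e | e) <;> simp [split]
  simp only [degree, swap, hpreimage]
  exact Set.ncard_pair (by simp)

theorem sum_degree [Fintype Z] : ∑ z, G.degree z = Nat.card E := by
  simp [Nat.card_congr G.slots]

theorem card_pathVertex [Finite Z] : Nat.card G.PathVertex = Nat.card Z + Nat.card E := by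
  have := Fintype.ofFinite Z
  simp [sum_add_distrib, sum_degree, add_comm]

/-- The vertices other than `hole z` of the path replacing `z`, indexed in path order by the edges
at `z`. -/
noncomputable def skip (hole : ∀ z, Fin (G.degree z + 1)) (e : E) : G.PathVertex :=
  Sigma.map id (fun z => (hole z).succAbove) (G.slots e)

/-- The path edge matching the new vertex `e` of the second class to `G.skip hole e`; it joins `e`
to `G.before e` if it is of the form `Sum.inl e`, and to `G.after e` otherwise. -/
noncomputable def pathEdge (hole : ∀ z, Fin (G.degree z + 1)) (e : E) : E ⊕ E :=
  if (G.slots e).2.castSucc < hole (G.slots e).1 then Sum.inl e else Sum.inr e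

theorem elim_before_after_pathEdge (hole : ∀ z, Fin (G.degree z + 1)) (e : E) :
    Sum.elim G.before G.after (G.pathEdge hole e) = G.skip hole e := by
  unfold pathEdge
  split_ifs with h
  · exact Sigma.ext rfl (heq_of_eq (Fin.succAbove_of_castSucc_lt _ _ h).symm)
  · exact Sigma.ext rfl (heq_of_eq (Fin.succAbove_of_le_castSucc _ _ (not_lt.1 h)).symm)

theorem elim_inr_inr_pathEdge (hole : ∀ z, Fin (G.degree z + 1)) (e : E) :
    Sum.elim Sum.inr Sum.inr (G.pathEdge hole e) = (Sum.inr e : W ⊕ E) := by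
  unfold pathEdge
  split_ifs <;> rfl

theorem skip_injective (hole : ∀ z, Fin (G.degree z + 1)) : Injective (G.skip hole) :=
  (injective_id.sigma_map fun _ => Fin.succAbove_right_injective).comp G.slots.injective

theorem range_skip (hole : ∀ z, Fin (G.degree z + 1)) :
    Set.range (G.skip hole) = (Set.range fun z => ⟨z, hole z⟩)ᶜ := by
  ext ⟨z, i⟩
  constructor
  · rintro ⟨e, he⟩ ⟨z', hz'⟩
    obtain ⟨rfl, hhole⟩ := Sigma.mk.inj_iff.1 (hz'.trans he.symm)
    exact Fin.ne_succAbove _ _ (eq_of_heq hhole)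
  · intro hi
    have hne : i ≠ hole z := fun h => hi ⟨z, h ▸ rfl⟩
    obtain ⟨j, rfl⟩ := Fin.exists_succAbove_eq hne
    exact ⟨G.slots.symm ⟨z, j⟩, by rw [skip, Equiv.apply_symm_apply]; rfl⟩

variable {G} {A : Set Z} {B : Set W}

theorem exists_image_after_eq {M : Set E} (hM : Set.BijOn G.fst M Aᶜ) :
    ∃ hole : ∀ z, Fin (G.degree z + 1),
      G.after '' M = (fun z => ⟨z, hole z⟩) '' Aᶜ ∧ ∀ z ∈ A, hole z = 0 := by
  have hexists (z : Z) : ∃ i : Fin (G.degree z + 1),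
      (∀ j, G.slots.symm ⟨z, j⟩ ∈ M → i = j.succ) ∧ (z ∈ A → i = 0) := by
    by_cases hz : ∃ j, G.slots.symm ⟨z, j⟩ ∈ M
    · obtain ⟨j, hj⟩ := hz
      refine ⟨j.succ, fun j' hj' => ?_, fun hzA => ?_⟩
      · have heq := hM.injOn hj hj' (by simp only [fst_slots_symm])
        simpa using heq
      · exact absurd hzA (by simpa only [fst_slots_symm, Set.mem_compl_iff] using hM.mapsTo hj)
    · exact ⟨0, fun j hj => absurd ⟨j, hj⟩ hz, fun _ => rfl⟩
  choose hole hmatched hhole_zero using hexists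
  refine ⟨hole, ?_, hhole_zero⟩
  rw [← hM.image_eq, Set.image_image]
  refine Set.image_congr fun e he => ?_
  rw [hmatched (G.fst e) (G.slots e).2 ((G.slots.symm_apply_apply e).symm ▸ he)]
  rfl

theorem HasPerfectMatching.split (h : G.HasPerfectMatching Aᶜ Bᶜ) :
    G.split.HasPerfectMatching ((fun z => ⟨z, 0⟩) '' A)ᶜ (Sum.inl '' B)ᶜ := by
  obtain ⟨M, hfst, hsnd⟩ := h
  obtain ⟨hole, hmatched, hhole_zero⟩ := exists_image_after_eq hfst
  let edges : M ⊕ E → E ⊕ E ⊕ E := Sum.map Subtype.val (G.pathEdge hole)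
  have hedges_fst : G.split.fst ∘ edges = Sum.elim (G.after ∘ Subtype.val) (G.skip hole) :=
    funext (Sum.rec (fun _ => rfl) (elim_before_after_pathEdge G hole))
  have hedges_snd : G.split.snd ∘ edges = Sum.map (G.snd ∘ Subtype.val) id :=
    funext (Sum.rec (fun _ => rfl) (elim_inr_inr_pathEdge G hole))
  have hroot : (fun z => (⟨z, 0⟩ : G.PathVertex)) '' A = (fun z => ⟨z, hole z⟩) '' A :=
    Set.image_congr fun z hz => by rw [hhole_zero z hz]
  have hhole_injective : Injective fun z => (⟨z, hole z⟩ : G.PathVertex) :=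
    fun _ _ h => congrArg Sigma.fst h
  refine ⟨Set.range edges, bijOn_range_of_injective_comp ?_ ?_,
    bijOn_range_of_injective_comp ?_ ?_⟩
  · rw [hedges_fst]
    refine (G.after_injective.comp Subtype.val_injective).sumElim (G.skip_injective hole) ?_
    intro e e' heq
    obtain ⟨z, -, hz⟩ := hmatched.subset (Set.mem_image_of_mem _ e.2)
    exact (range_skip G hole).subset ⟨e', rfl⟩ ⟨z, hz.trans heq⟩
  · rw [hedges_fst, Set.Sum.elim_range, Set.range_comp, Subtype.range_coe, hmatched, range_skip,
      hroot]
    exact image_compl_union_compl_range hhole_injective A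
  · rw [hedges_snd]
    exact Sum.map_injective.2 ⟨hsnd.injOn.injective, injective_id⟩
  · rw [hedges_snd, Sum.map, Set.Sum.elim_range, Set.range_comp, Set.range_comp, Subtype.range_coe,
      hsnd.image_eq, comp_id, ← Set.compl_range_inl]
    exact image_compl_union_compl_range Sum.inl_injective B

end Split

/-- Splits the vertices of the first class into paths, and then those of the second class,
including the new ones. -/
noncomputable def splitBoth [Finite E] (G : BipartiteMultigraph Z W E) :
    BipartiteMultigraph (G.PathVertex ⊕ E ⊕ E ⊕ E) G.split.swap.PathVertex
      ((E ⊕ E ⊕ E) ⊕ (E ⊕ E ⊕ E) ⊕ E ⊕ E ⊕ E) :=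
  G.split.swap.split.swap

/-- `G` is robust with respect to the vertices `f y` of its second class: keeping any `k` of them,
one gets a perfect matching between `Z` and the vertices that are kept or not of the form `f y`. -/
def IsRobust (G : BipartiteMultigraph Z W E) (f : Y → W) (k : ℕ) : Prop :=
  ∀ Y' : Finset Y, #Y' = k → G.HasPerfectMatching Set.univ (f '' (↑Y')ᶜ)ᶜ

section Robust

variable [Finite E] (G : BipartiteMultigraph Z W E)

theorem splitBoth_degree_le (z : G.PathVertex ⊕ E ⊕ E ⊕ E) : G.splitBoth.degree z ≤ 3 := by
  cases z with
  | inl z => exact (split_swap_degree_inl G.split.swap z).trans_le (G.split_degree_le z)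
  | inr e => exact (split_swap_degree_inr G.split.swap e).trans_le (by simp)

theorem splitBoth_swap_degree_le (w : G.split.swap.PathVertex) : G.splitBoth.swap.degree w ≤ 3 :=
  G.split.swap.split_degree_le w

theorem card_splitBoth_fst [Finite Z] :
    Nat.card (G.PathVertex ⊕ E ⊕ E ⊕ E) = Nat.card Z + 4 * Nat.card E := by
  simp only [Nat.card_sum, card_pathVertex]
  lia

theorem card_splitBoth_snd [Finite W] :
    Nat.card G.split.swap.PathVertex = Nat.card W + 4 * Nat.card E := by
  simp only [Nat.card_sum, card_pathVertex]
  lia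

variable {G}

theorem HasPerfectMatching.splitBoth {B : Set W} (h : G.HasPerfectMatching Set.univ Bᶜ) :
    G.splitBoth.HasPerfectMatching Set.univ ((fun w => ⟨Sum.inl w, 0⟩) '' B)ᶜ := by
  rw [← Set.compl_empty] at h
  simpa only [BipartiteMultigraph.splitBoth, Set.image_empty, Set.compl_empty, Set.image_image]
    using h.split.swap.split.swap

theorem IsRobust.splitBoth {f : Y → W} {k : ℕ} (h : G.IsRobust f k) :
    G.splitBoth.IsRobust (fun y => ⟨Sum.inl (f y), 0⟩) k := fun Y' hY' => by
  simpa only [Set.image_image] using (h Y' hY').splitBoth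

end Robust

theorem exists_isRobust {Y : Type*} [Finite Y] {m : ℕ} (hY : Nat.card Y = 2 * m) :
    ∃ G : BipartiteMultigraph (Fin (3 * m)) (Fin (2 * m) ⊕ Y)
        (Fin (3 * m) × Fin 11 ⊕ (Fin (2 * m) ⊕ Y) × Fin 11), G.IsRobust Sum.inr m := by
  classical
  have := Fintype.ofFinite Y
  rw [Nat.card_eq_fintype_card] at hY
  obtain ⟨f, hf⟩ := exists_expander (α := Fin (3 * m)) (β := Fin (2 * m)) (by simp; lia)
  obtain ⟨g, hg⟩ := exists_expander (α := Fin (2 * m) ⊕ Y) (β := Fin (3 * m)) (by simp; lia)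
  refine ⟨⟨Sum.elim Prod.fst g, Sum.elim (Sum.inl ∘ f) Prod.fst⟩, fun Y' hY' => ?_⟩
  let P : Finset (Fin (2 * m) ⊕ Y) := univ.disjSum Y'
  have hP : (Sum.inr '' (↑Y')ᶜ)ᶜ = (P : Set (Fin (2 * m) ⊕ Y)) := by
    ext (x | y) <;> simp [P]
  have hcard : #P = 3 * m := by simp [P, hY']; lia
  rw [hP]
  refine hasPerfectMatching_of_hall _ (by simpa using hcard) (4 * m / 3) (fun A hA => ?_)
    fun B _ hB => ?_
  · refine ⟨((A ×ˢ univ).image f).disjSum ∅, ?_, ?_, ?_⟩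
    · exact disjSum_mono (subset_univ _) (empty_subset _)
    · simpa using hf A (by simp; lia)
    · simp only [mem_disjSum, mem_image, mem_product]
      rintro _ (⟨_, ⟨e, ⟨he, -⟩, rfl⟩, rfl⟩ | ⟨_, h, -⟩)
      · exact ⟨e.1, he, Sum.inl e, rfl, rfl⟩
      · simp at h
  · refine ⟨(B ×ˢ univ).image g, hg B (by simp; lia), fun z hz => ?_⟩
    obtain ⟨e, he, rfl⟩ := mem_image.1 hz
    exact ⟨e.1, (mem_product.1 he).1, Sum.inr e, rfl, rfl⟩

end BipartiteMultigraph

open BipartiteMultigraph in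
theorem exists_sparse_robust_bipartite_general {Z X Y : Type*} [Finite Z] [Finite X] [Finite Y]
    {m : ℕ} (hZ : Nat.card Z = 311 * m) (hX : Nat.card X = 310 * m) (hY : Nat.card Y = 2 * m) :
    ∃ R : Z → X ⊕ Y → Prop,
      (∀ z, {w | R z w}.ncard ≤ 3) ∧
      (∀ w, {z | R z w}.ncard ≤ 3) ∧
      ∀ Y' : Finset Y, #Y' = m →
        ∃ ξ : Z → X ⊕ Y, Injective ξ ∧ (∀ z, R z (ξ z)) ∧
          Set.range ξ = Set.range Sum.inl ∪ Sum.inr '' ↑Y' := by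
  obtain ⟨G, hG⟩ := exists_isRobust hY
  have hE : Nat.card (Fin (3 * m) × Fin 11 ⊕ (Fin (2 * m) ⊕ Y) × Fin 11) = 77 * m := by
    simp only [Nat.card_sum, Nat.card_prod, Nat.card_fin, hY]
    lia
  obtain ⟨φ⟩ : Nonempty (Z ≃ _) := Finite.card_eq.1 <| hZ.trans <| .symm <|
    G.card_splitBoth_fst.trans (by rw [hE, Nat.card_fin]; lia)
  obtain ⟨ψ, hψ⟩ := exists_equiv_sum_inr_eq (α := X)
    (f := fun y => (⟨Sum.inl (Sum.inr y), 0⟩ : G.split.swap.PathVertex))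
    (fun y y' h => by simpa using congrArg Sigma.fst h)
    (by rw [card_splitBoth_snd, hE, Nat.card_sum, Nat.card_fin, hX, hY]; lia)
  refine ⟨fun z w => G.splitBoth.Adj (φ z) (ψ.symm w), fun z => ?_, fun w => ?_, fun Y' hY' => ?_⟩
  · exact (ncard_setOf_adj_le_degree _ ψ.symm.injective _).trans (G.splitBoth_degree_le _)
  · simp only [← swap_adj (G := G.splitBoth)]
    exact (ncard_setOf_adj_le_degree _ φ.injective _).trans (G.splitBoth_swap_degree_le _)
  · obtain ⟨ξ, hξ, hadj, hrange⟩ := (hG.splitBoth Y' hY').exists_injective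
    refine ⟨ψ ∘ ξ ∘ φ, ψ.injective.comp (hξ.comp φ.injective), fun z => ?_, ?_⟩
    · simpa using hadj (φ z)
    · rw [Set.range_comp, φ.surjective.range_comp, hrange, Set.image_compl_eq ψ.bijective,
        Set.image_image]
      simp only [hψ]
      rw [← image_compl_union_compl_range Sum.inr_injective, compl_compl, Set.compl_range_inr,
        Set.union_comm]

/-- **Lemma 5.4 (sparse robust bipartite graphs).**
There are `m₀, C ∈ ℕ` such that for every `m ≥ m₀` there is a bipartite graph `B` on
vertex classes `Z` and `X ∪ Y` (here `Z = Fin (C·m)`, `X = Fin ((C−1)·m)`, `Y = Fin (2m)`,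
and `B` is given by the adjacency relation `R` between the two classes) such that every
vertex of `Z` has degree at most `3`, every vertex of `X ∪ Y` has degree at most `40`
(so `Δ(B) ≤ 40`), and `B` is `Y`-robust: for every `Y' ⊆ Y` of size
`|Z| − |X| = m` there is a perfect matching between `Z` and `X ∪ Y'`. -/
theorem exists_sparse_robust_bipartite :
    ∃ m₀ C : ℕ, 0 < C ∧ ∀ m : ℕ, m₀ ≤ m →
      ∃ R : Fin (C * m) → Fin ((C - 1) * m) ⊕ Fin (2 * m) → Prop,
        (∀ z, {w | R z w}.ncard ≤ 3) ∧
        (∀ w, {z | R z w}.ncard ≤ 40) ∧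
        ∀ Y' : Finset (Fin (2 * m)), Y'.card = m →
          ∃ ξ : Fin (C * m) → Fin ((C - 1) * m) ⊕ Fin (2 * m),
            Function.Injective ξ ∧ (∀ z, R z (ξ z)) ∧
            Set.range ξ = Set.range Sum.inl ∪ (Sum.inr '' ↑Y') := by
  refine ⟨0, 311, by simp, fun m _ => ?_⟩
  obtain ⟨R, hZ, hXY, hrobust⟩ := exists_sparse_robust_bipartite_general (Z := Fin (311 * m))
    (X := Fin ((311 - 1) * m)) (Y := Fin (2 * m)) (m := m) (by simp) (by simp) (by simp)
  exact ⟨R, hZ, fun w => (hXY w).trans (by simp), hrobust⟩
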